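/- Suppose that p = p(n) satisfies log(n)/n ≪ p ≤ 1/log² n, and let 0 < C₁ < C₂ < 1 be constants. Then for each fixed vertex v of G(n,p), asymptotically almost surely pt_pzf(G(n,p), v) ≥ (C₂ − C₁) log₄(1/p). -/

import Mathlib

open Finset Filter Real
open scoped Classical

namespace PZF

variable {V : Type*} [Fintype V] [DecidableEq V]

/-- The closed degree of `u` into the set `B`, i.e. `|N[u] ∩ B|`. -/
noncomputable def closedDegIn (G : SimpleGraph V) (B : Finset V) (u : V) : ℕ :=
  ((insert u (G.neighborSet u)) ∩ (B : Set V)).ncard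

/-- The degree of `u` in `G`. -/
noncomputable def deg (G : SimpleGraph V) (u : V) : ℕ :=
  (G.neighborSet u).ncard

/-- The probability that the blue vertex `u` forces its white neighbour `v` in one round of
probabilistic zero forcing, when the current blue set is `B`: it equals `|N[u] ∩ B| / deg u`
when `u` is blue, `v` is a white neighbour of `u`, and `0` otherwise. -/
noncomputable def edgeForceProb (G : SimpleGraph V) (B : Finset V) (u v : V) : ℝ :=
  if G.Adj u v ∧ u ∈ B ∧ v ∉ B then (closedDegIn G B u : ℝ) / (deg G u : ℝ) else 0

/-- Given per-ordered-pair forcing probabilities `q u v` (each attempt independent), the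
probability that one round starting from the blue set `B` produces exactly the blue set `B'`. -/
noncomputable def stepOfQ (q : V → V → ℝ) (B B' : Finset V) : ℝ :=
  if B ⊆ B' then
    (∏ v ∈ B' \ B, (1 - ∏ u ∈ B, (1 - q u v))) * ∏ v ∈ B'ᶜ, ∏ u ∈ B, (1 - q u v)
  else 0

/-- The transition rule of standard probabilistic zero forcing, as a function of the history
(the list of blue sets so far; only the current blue set matters). -/
noncomputable def stdStep (G : SimpleGraph V) (hist : List (Finset V)) (B' : Finset V) : ℝ :=
  stepOfQ (edgeForceProb G (hist.getLastD ∅)) (hist.getLastD ∅) B'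

/-- Probability of a given future trajectory, given the history so far. -/
noncomputable def seqProbAux (step : List (Finset V) → Finset V → ℝ) :
    List (Finset V) → List (Finset V) → ℝ
  | _, [] => 1
  | hist, B :: rest => step hist B * seqProbAux step (hist ++ [B]) rest

/-- The probability that, running the process given by the transition rule `step` from the
initial blue set `S` for `ℓ` rounds, the resulting trajectory (including the initial set)
satisfies the predicate `E`. -/
noncomputable def trajEventProb (step : List (Finset V) → Finset V → ℝ) (S : Finset V)
    (ℓ : ℕ) (E : List (Finset V) → Prop) : ℝ :=
  ∑ f : Fin ℓ → Finset V,
    if E (S :: List.ofFn f) then seqProbAux step [S] (List.ofFn f) else 0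

/-- `P(A(S,T,ℓ))`: the probability that, starting probabilistic zero forcing from the blue
set `S`, after `ℓ` rounds every vertex of `T` is blue. -/
noncomputable def probForced (G : SimpleGraph V) (S T : Finset V) (ℓ : ℕ) : ℝ :=
  trajEventProb (stdStep G) S ℓ fun traj => T ⊆ traj.getLastD ∅

/-- `P(pt_pzf(G,S) ≤ ℓ)`: the probability that all vertices are blue after `ℓ` rounds. -/
noncomputable def probAllBlue (G : SimpleGraph V) (S : Finset V) (ℓ : ℕ) : ℝ :=
  probForced G S Finset.univ ℓ

/-- The probability of a fixed graph `G` under the Erdős–Rényi measure `G(n,p)`. -/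
noncomputable def erProb (n : ℕ) (p : ℝ) (G : SimpleGraph (Fin n)) : ℝ :=
  p ^ G.edgeSet.ncard * (1 - p) ^ (n.choose 2 - G.edgeSet.ncard)

/-- The probability that `G(n,p)` satisfies the property `E`. -/
noncomputable def graphProb (n : ℕ) (p : ℝ) (E : SimpleGraph (Fin n) → Prop) : ℝ :=
  ∑ G : SimpleGraph (Fin n), if E G then erProb n p G else 0

/-- `P(pt_pzf(G(n,p), v) ≤ ℓ)`: the joint probability (over the random graph and the forcing
randomness) that probabilistic zero forcing started at `{v}` turns all of `G(n,p)` blue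
within `ℓ` rounds. -/
noncomputable def prPZFwithin (n : ℕ) (p : ℝ) (v : Fin n) (ℓ : ℕ) : ℝ :=
  ∑ G : SimpleGraph (Fin n), erProb n p G * probAllBlue G {v} ℓ

end PZF

namespace PZF

/-- Expectation of `f S` where `S` is a random subset of `T`, each `a ∈ T` being kept
independently with probability `r a`. -/
noncomputable def PEs {α : Type*} [DecidableEq α] (T : Finset α) (r : α → ℝ)
    (f : Finset α → ℝ) : ℝ :=
  ∑ S ∈ T.powerset, (∏ a ∈ S, r a) * (∏ a ∈ T \ S, (1 - r a)) * f S

section PEs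

variable {α : Type*} [DecidableEq α]

lemma PEs_empty (r : α → ℝ) (f : Finset α → ℝ) : PEs ∅ r f = f ∅ := by
  simp [PEs]

lemma PEs_insert {a : α} {T : Finset α} (ha : a ∉ T) (r : α → ℝ) (f : Finset α → ℝ) :
    PEs (insert a T) r f =
      r a * PEs T r (fun S => f (insert a S)) + (1 - r a) * PEs T r f := by
  unfold PEs
  rw [Finset.sum_powerset_insert ha, add_comm, Finset.mul_sum, Finset.mul_sum]
  congr 1
  · refine Finset.sum_congr rfl fun S hS => ?_
    have hS' := Finset.mem_powerset.1 hS
    have h1 : a ∉ S := fun h => ha (hS' h)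
    rw [Finset.prod_insert h1]
    have : insert a T \ insert a S = T \ S := by
      ext x; simp only [Finset.mem_sdiff, Finset.mem_insert]
      constructor
      · rintro ⟨h | h, h2⟩
        · exact absurd (Or.inl h) h2
        · exact ⟨h, fun h' => h2 (Or.inr h')⟩
      · rintro ⟨h, h2⟩
        refine ⟨Or.inr h, ?_⟩
        rintro (h' | h')
        · exact ha (h' ▸ h)
        · exact h2 h'
    rw [this]; ring
  · refine Finset.sum_congr rfl fun S hS => ?_
    have hS' := Finset.mem_powerset.1 hS
    have h1 : a ∉ S := fun h => ha (hS' h)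
    rw [Finset.insert_sdiff_of_notMem _ h1, Finset.prod_insert (by simp [ha])]
    ring

lemma PEs_congr {T : Finset α} {r : α → ℝ} {f g : Finset α → ℝ}
    (h : ∀ S ⊆ T, f S = g S) : PEs T r f = PEs T r g := by
  unfold PEs
  refine Finset.sum_congr rfl fun S hS => ?_
  rw [h S (Finset.mem_powerset.1 hS)]

lemma PEs_le {T : Finset α} {r : α → ℝ} {f g : Finset α → ℝ}
    (hr : ∀ a, 0 ≤ r a ∧ r a ≤ 1) (h : ∀ S ⊆ T, f S ≤ g S) : PEs T r f ≤ PEs T r g := by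
  unfold PEs
  refine Finset.sum_le_sum fun S hS => ?_
  refine mul_le_mul_of_nonneg_left (h S (Finset.mem_powerset.1 hS)) ?_
  exact mul_nonneg (Finset.prod_nonneg fun a _ => (hr a).1)
    (Finset.prod_nonneg fun a _ => by linarith [(hr a).2])

lemma PEs_const_mul (T : Finset α) (r : α → ℝ) (c : ℝ) (f : Finset α → ℝ) :
    PEs T r (fun S => c * f S) = c * PEs T r f := by
  unfold PEs
  rw [Finset.mul_sum]
  exact Finset.sum_congr rfl fun S _ => by ring

lemma PEs_add (T : Finset α) (r : α → ℝ) (f g : Finset α → ℝ) :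
    PEs T r (fun S => f S + g S) = PEs T r f + PEs T r g := by
  unfold PEs
  rw [← Finset.sum_add_distrib]
  exact Finset.sum_congr rfl fun S _ => by ring

lemma PEs_sum {ι : Type*} (I : Finset ι) (T : Finset α) (r : α → ℝ) (f : ι → Finset α → ℝ) :
    PEs T r (fun S => ∑ i ∈ I, f i S) = ∑ i ∈ I, PEs T r (f i) := by
  unfold PEs
  rw [Finset.sum_comm]
  exact Finset.sum_congr rfl fun S _ => by rw [Finset.mul_sum]

lemma PEs_const (T : Finset α) (r : α → ℝ) (c : ℝ) : PEs T r (fun _ => c) = c := by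
  induction T using Finset.induction_on with
  | empty => rw [PEs_empty]
  | insert a T ha ih => rw [PEs_insert ha, ih]; ring

lemma PEs_nonneg {T : Finset α} {r : α → ℝ} {f : Finset α → ℝ}
    (hr : ∀ a, 0 ≤ r a ∧ r a ≤ 1) (h : ∀ S ⊆ T, 0 ≤ f S) : 0 ≤ PEs T r f := by
  rw [← PEs_const T r 0]; exact PEs_le hr h

lemma PEs_mono {T : Finset α} {r r' : α → ℝ} (hr : ∀ a, 0 ≤ r a ∧ r a ≤ 1)
    (hr' : ∀ a, 0 ≤ r' a ∧ r' a ≤ 1) (hrr : ∀ a, r a ≤ r' a)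
    {f : Finset α → ℝ} (hf : ∀ S S', S ⊆ S' → f S ≤ f S') :
    PEs T r f ≤ PEs T r' f := by
  induction T using Finset.induction_on generalizing f with
  | empty => simp [PEs_empty]
  | insert a T ha ih =>
    rw [PEs_insert ha, PEs_insert ha]
    have h1 := ih hf
    have h2 := ih (f := fun S => f (insert a S))
      (fun S S' h => hf _ _ (Finset.insert_subset_insert a h))
    have h3 : PEs T r' f ≤ PEs T r' (fun S => f (insert a S)) :=
      PEs_le hr' fun S _ => hf _ _ (Finset.subset_insert a S)
    have := hr a; have := hr' a; have := hrr a
    have e1 := mul_le_mul_of_nonneg_left h2 (hr a).1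
    have e2 := mul_le_mul_of_nonneg_left h1 (sub_nonneg.2 (hr a).2)
    have e3 := mul_nonneg (sub_nonneg.2 (hrr a)) (sub_nonneg.2 h3)
    nlinarith

lemma PEs_union {T1 T2 : Finset α} (hd : Disjoint T1 T2) (r : α → ℝ) (f : Finset α → ℝ) :
    PEs (T1 ∪ T2) r f = PEs T1 r (fun S1 => PEs T2 r (fun S2 => f (S1 ∪ S2))) := by
  induction T1 using Finset.induction_on generalizing f with
  | empty => simp [PEs_empty]
  | insert a T ha ih =>
    rw [Finset.disjoint_insert_left] at hd
    rw [Finset.insert_union, PEs_insert (by simp [ha, hd.1]), PEs_insert ha, ih hd.2, ih hd.2]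
    simp only [Finset.insert_union]

lemma PEs_tilt {T : Finset α} {r c : α → ℝ} (h : ∀ a, 1 - r a * c a ≠ 0)
    (g : Finset α → ℝ) :
    PEs T r (fun S => (∏ a ∈ S, (1 - c a)) * g S) =
      (∏ a ∈ T, (1 - r a * c a)) *
        PEs T (fun a => r a * (1 - c a) / (1 - r a * c a)) g := by
  induction T using Finset.induction_on generalizing g with
  | empty => simp [PEs_empty]
  | insert a T ha ih =>
    rw [PEs_insert ha, PEs_insert ha, Finset.prod_insert ha, ih]
    have : PEs T r (fun S => (∏ a ∈ insert a S, (1 - c a)) * g (insert a S)) =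
        (1 - c a) * PEs T r (fun S => (∏ a ∈ S, (1 - c a)) * g (insert a S)) := by
      rw [← PEs_const_mul]
      refine PEs_congr fun S hS => ?_
      rw [Finset.prod_insert (fun h => ha (hS h))]; ring
    rw [this, ih]
    have := h a
    field_simp
    ring

lemma PEs_subset_le {T : Finset α} {r : α → ℝ} (hr : ∀ a, 0 ≤ r a ∧ r a ≤ 1)
    (D : Finset α) :
    PEs T r (fun S => if D ⊆ S then 1 else 0) ≤ ∏ a ∈ D, r a := by
  induction T using Finset.induction_on generalizing D with
  | empty =>
    rw [PEs_empty]
    split_ifs with h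
    · rw [Finset.subset_empty.1 h]; simp
    · exact Finset.prod_nonneg fun a _ => (hr a).1
  | insert a T ha ih =>
    rw [PEs_insert ha]
    by_cases haD : a ∈ D
    · have h1 : PEs T r (fun S => if D ⊆ insert a S then 1 else 0) ≤ ∏ b ∈ D.erase a, r b := by
        refine le_trans (le_of_eq ?_) (ih (D.erase a))
        refine PEs_congr fun S hS => ?_
        simp only [Finset.subset_insert_iff]
      have h2 : PEs T r (fun S => if D ⊆ S then (1 : ℝ) else 0) = 0 := by
        refine (PEs_congr fun S hS => ?_).trans (PEs_const T r 0)
        rw [if_neg]; intro h; exact ha (hS (h haD))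
      rw [h2, ← Finset.mul_prod_erase D r haD, mul_zero, add_zero]
      exact mul_le_mul_of_nonneg_left h1 (hr a).1
    · have h1 : PEs T r (fun S => if D ⊆ insert a S then 1 else 0) ≤ ∏ b ∈ D, r b := by
        refine le_trans (le_of_eq ?_) (ih D)
        refine PEs_congr fun S hS => ?_
        simp only [Finset.subset_insert_iff, Finset.erase_eq_of_notMem haD]
      have := ih D
      have e1 := mul_le_mul_of_nonneg_left h1 (hr a).1
      have e2 := mul_le_mul_of_nonneg_left (ih D) (sub_nonneg.2 (hr a).2)
      linarith

end PEs

section Annealed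

set_option linter.unusedSectionVars false

variable {V : Type*} [Fintype V] [DecidableEq V]

/-- Closed degree into `B`, for a graph given by an edge set. -/
noncomputable def bS (S : Finset (Sym2 V)) (B : Finset V) (u : V) : ℕ :=
  (B.filter (fun x => u = x ∨ s(u, x) ∈ S)).card

/-- Forcing probability with degree replaced by the constant `d`. -/
noncomputable def qS (d : ℝ) (S : Finset (Sym2 V)) (B : Finset V) (u : V) : ℝ :=
  min 1 ((bS S B u : ℝ) / d)

/-- Probability that `w` is blue after one round. -/
noncomputable def rS (d : ℝ) (S : Finset (Sym2 V)) (B : Finset V) (w : V) : ℝ :=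
  if w ∈ B then 1 else 1 - ∏ u ∈ B, (1 - if s(u, w) ∈ S then qS d S B u else 0)

/-- Probability that everything is blue after `ℓ` rounds of the dominating process. -/
noncomputable def FS (d : ℝ) (S : Finset (Sym2 V)) : ℕ → Finset V → ℝ
  | 0, B => if B = Finset.univ then 1 else 0
  | ℓ + 1, B => PEs Finset.univ (rS d S B) (FS d S ℓ)

/-- The potential. -/
noncomputable def XS (S : Finset (Sym2 V)) (B : Finset V) : ℝ := ∑ u ∈ B, (bS S B u : ℝ)

lemma bS_congr {S S' : Finset (Sym2 V)} {B : Finset V} {u : V}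
    (h : ∀ x ∈ B, (s(u, x) ∈ S ↔ s(u, x) ∈ S')) : bS S B u = bS S' B u := by
  unfold bS
  congr 1
  refine Finset.filter_congr fun x hx => ?_
  rw [h x hx]

lemma bS_mono {S : Finset (Sym2 V)} {B B' : Finset V} (h : B ⊆ B') (u : V) :
    bS S B u ≤ bS S B' u :=
  Finset.card_le_card (Finset.filter_subset_filter _ h)

lemma qS_bounds {d : ℝ} (hd : 0 < d) (S : Finset (Sym2 V)) (B : Finset V) (u : V) :
    0 ≤ qS d S B u ∧ qS d S B u ≤ 1 :=
  ⟨le_min zero_le_one (by positivity), min_le_left _ _⟩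

lemma qS_mono {d : ℝ} (hd : 0 < d) {S : Finset (Sym2 V)} {B B' : Finset V} (h : B ⊆ B') (u : V) :
    qS d S B u ≤ qS d S B' u := by
  unfold qS
  have := bS_mono (S := S) h u
  gcongr

lemma qite_bounds {d : ℝ} (hd : 0 < d) (S : Finset (Sym2 V)) (B : Finset V) (u w : V) :
    0 ≤ (if s(u, w) ∈ S then qS d S B u else 0) ∧
    (if s(u, w) ∈ S then qS d S B u else 0) ≤ 1 := by
  have := qS_bounds hd S B u
  split_ifs
  · exact this
  · simp

lemma rS_bounds {d : ℝ} (hd : 0 < d) (S : Finset (Sym2 V)) (B : Finset V) (w : V) :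
    0 ≤ rS d S B w ∧ rS d S B w ≤ 1 := by
  unfold rS
  split_ifs
  · simp
  · have h0 : 0 ≤ ∏ u ∈ B, (1 - if s(u, w) ∈ S then qS d S B u else 0) :=
      Finset.prod_nonneg fun u _ => by linarith [(qite_bounds hd S B u w).2]
    have h1 : ∏ u ∈ B, (1 - if s(u, w) ∈ S then qS d S B u else 0) ≤ 1 :=
      Finset.prod_le_one (fun u _ => by linarith [(qite_bounds hd S B u w).2])
        (fun u _ => by linarith [(qite_bounds hd S B u w).1])
    constructor <;> linarith

lemma rS_mono {d : ℝ} (hd : 0 < d) {S : Finset (Sym2 V)} {B B' : Finset V} (h : B ⊆ B') (w : V) :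
    rS d S B w ≤ rS d S B' w := by
  by_cases hw : w ∈ B'
  · refine (rS_bounds hd S B w).2.trans (le_of_eq ?_)
    simp [rS, hw]
  · have hw' : w ∉ B := fun h' => hw (h h')
    simp only [rS, hw, hw', if_false]
    refine sub_le_sub_left ?_ 1
    rw [← Finset.prod_sdiff h]
    have h1 : ∏ u ∈ B' \ B, (1 - if s(u, w) ∈ S then qS d S B' u else 0) ≤ 1 :=
      Finset.prod_le_one (fun u _ => by linarith [(qite_bounds hd S B' u w).2])
        (fun u _ => by linarith [(qite_bounds hd S B' u w).1])
    have h2 : ∏ u ∈ B, (1 - if s(u, w) ∈ S then qS d S B' u else 0) ≤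
        ∏ u ∈ B, (1 - if s(u, w) ∈ S then qS d S B u else 0) := by
      refine Finset.prod_le_prod (fun u _ => by linarith [(qite_bounds hd S B' u w).2]) ?_
      intro u _
      have := qS_mono hd (S := S) h u
      split_ifs <;> linarith
    have h3 : 0 ≤ ∏ u ∈ B, (1 - if s(u, w) ∈ S then qS d S B' u else 0) :=
      Finset.prod_nonneg fun u _ => by linarith [(qite_bounds hd S B' u w).2]
    calc _ ≤ 1 * ∏ u ∈ B, (1 - if s(u, w) ∈ S then qS d S B' u else 0) :=
          mul_le_mul_of_nonneg_right h1 h3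
      _ ≤ _ := by rw [one_mul]; exact h2

lemma FS_mono {d : ℝ} (hd : 0 < d) (S : Finset (Sym2 V)) (ℓ : ℕ) :
    ∀ B B' : Finset V, B ⊆ B' → FS d S ℓ B ≤ FS d S ℓ B' := by
  induction ℓ with
  | zero =>
    intro B B' h
    simp only [FS]
    split_ifs with h1 h2
    · exact le_rfl
    · subst h1; exact absurd (Finset.univ_subset_iff.1 h) h2
    · norm_num
    · exact le_rfl
  | succ ℓ ih =>
    intro B B' h
    simp only [FS]
    exact PEs_mono (rS_bounds hd S B) (rS_bounds hd S B') (rS_mono hd h) ih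

lemma FS_bounds {d : ℝ} (hd : 0 < d) (S : Finset (Sym2 V)) (ℓ : ℕ) :
    ∀ B : Finset V, 0 ≤ FS d S ℓ B ∧ FS d S ℓ B ≤ 1 := by
  induction ℓ with
  | zero =>
    intro B
    simp only [FS]
    split_ifs <;> norm_num
  | succ ℓ ih =>
    intro B
    simp only [FS]
    refine ⟨PEs_nonneg (rS_bounds hd S B) fun T _ => (ih T).1, ?_⟩
    rw [← PEs_const Finset.univ (rS d S B) 1]
    exact PEs_le (rS_bounds hd S B) fun T _ => (ih T).2

lemma one_sub_prod_le {ι : Type*} (I : Finset ι) (a : ι → ℝ) (ha : ∀ i, 0 ≤ a i ∧ a i ≤ 1) :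
    1 - ∏ i ∈ I, (1 - a i) ≤ ∑ i ∈ I, a i := by
  classical
  induction I using Finset.induction_on with
  | empty => simp
  | insert i I hi ih =>
    rw [Finset.prod_insert hi, Finset.sum_insert hi]
    have h0 : 0 ≤ ∏ i ∈ I, (1 - a i) := Finset.prod_nonneg fun u _ => by linarith [(ha u).2]
    have h1 : ∏ i ∈ I, (1 - a i) ≤ 1 :=
      Finset.prod_le_one (fun u _ => by linarith [(ha u).2]) (fun u _ => by linarith [(ha u).1])
    nlinarith [(ha i).1, mul_nonneg (ha i).1 (sub_nonneg.2 h1)]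

lemma XS_eq (S : Finset (Sym2 V)) (B : Finset V) :
    XS S B = ∑ x, ∑ y, (if x = y ∨ s(x, y) ∈ S then 1 else 0) *
      (if ({x, y} : Finset V) ⊆ B then (1 : ℝ) else 0) := by
  unfold XS bS
  rw [← Finset.sum_subset (Finset.subset_univ B)]
  · refine Finset.sum_congr rfl fun x hx => ?_
    rw [Finset.card_filter]
    push_cast
    rw [← Finset.sum_subset (Finset.subset_univ B)]
    · refine Finset.sum_congr rfl fun y hy => ?_
      simp [Finset.insert_subset_iff, hx, hy]
    · intro y _ hy
      simp [Finset.insert_subset_iff, hy]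
  · intro x _ hx
    refine Finset.sum_eq_zero fun y _ => ?_
    simp [Finset.insert_subset_iff, hx]

lemma inner_le {d : ℝ} (hd : 0 < d) (S : Finset (Sym2 V)) (B : Finset V) :
    PEs Finset.univ (rS d S B) (XS S) ≤
      ∑ x, ∑ y, (if x = y ∨ s(x, y) ∈ S then 1 else 0) *
        ∏ z ∈ ({x, y} : Finset V), rS d S B z := by
  have : XS S = fun B => ∑ x, ∑ y, (if x = y ∨ s(x, y) ∈ S then 1 else 0) *
      (if ({x, y} : Finset V) ⊆ B then (1 : ℝ) else 0) := funext (XS_eq S)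
  rw [this, PEs_sum]
  refine Finset.sum_le_sum fun x _ => ?_
  rw [PEs_sum]
  refine Finset.sum_le_sum fun y _ => ?_
  rw [PEs_const_mul]
  refine mul_le_mul_of_nonneg_left (PEs_subset_le (rS_bounds hd S B) _) ?_
  split_ifs <;> norm_num

/-- Summand of the one-step bound. -/
noncomputable def gS (d : ℝ) (S : Finset (Sym2 V)) (B : Finset V) (x y : V) : ℝ :=
  (if x = y ∨ s(x, y) ∈ S then 1 else 0) * ∏ z ∈ ({x, y} : Finset V), rS d S B z

lemma gS_symm (d : ℝ) (S : Finset (Sym2 V)) (B : Finset V) (x y : V) :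
    gS d S B x y = gS d S B y x := by
  unfold gS
  rw [Finset.pair_comm, Sym2.eq_swap]
  simp only [eq_comm (a := x) (b := y)]

lemma mem_union_iff {H S : Finset (Sym2 V)} {B : Finset V} (hH : H ⊆ B.sym2) {u w : V}
    (hw : w ∉ B) : s(u, w) ∈ H ∪ S ↔ s(u, w) ∈ S := by
  rw [Finset.mem_union, or_iff_right]
  intro h
  have := hH h
  rw [Finset.mk_mem_sym2_iff] at this
  exact hw this.2

lemma bS_union {H S : Finset (Sym2 V)} {B : Finset V} (hS : Disjoint S B.sym2) {u : V}
    (hu : u ∈ B) : bS (H ∪ S) B u = bS H B u := by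
  refine bS_congr fun x hx => ?_
  rw [Finset.mem_union, or_iff_left]
  intro h
  exact Finset.disjoint_left.1 hS h (Finset.mk_mem_sym2_iff.2 ⟨hu, hx⟩)

lemma qS_union {d : ℝ} {H S : Finset (Sym2 V)} {B : Finset V} (hS : Disjoint S B.sym2) {u : V}
    (hu : u ∈ B) : qS d (H ∪ S) B u = qS d H B u := by
  unfold qS; rw [bS_union hS hu]

lemma XS_union {H S : Finset (Sym2 V)} {B : Finset V} (hS : Disjoint S B.sym2) :
    XS (H ∪ S) B = XS H B := by
  unfold XS
  exact Finset.sum_congr rfl fun u hu => by rw [bS_union hS hu]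

/-- upper bound for `rS` at white vertices. -/
lemma rS_le {d : ℝ} (hd : 0 < d) {H S : Finset (Sym2 V)} {B : Finset V} (hH : H ⊆ B.sym2)
    (hS : Disjoint S B.sym2) {w : V} (hw : w ∉ B) :
    rS d (H ∪ S) B w ≤ ∑ u ∈ B, qS d H B u * (if s(u, w) ∈ S then 1 else 0) := by
  unfold rS
  rw [if_neg hw]
  refine (one_sub_prod_le _ _ fun u => qite_bounds hd _ _ u w).trans (le_of_eq ?_)
  refine Finset.sum_congr rfl fun u hu => ?_
  rw [qS_union hS hu]
  simp only [mem_union_iff hH hw]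
  simp

lemma prod_const_le {D : Finset (Sym2 V)} {ρ : Sym2 V → ℝ} {p : ℝ} (hρ : ∀ e, 0 ≤ ρ e ∧ ρ e ≤ p)
    {T : Finset (Sym2 V)} (hp1 : p ≤ 1) :
    PEs T ρ (fun S => if D ⊆ S then 1 else 0) ≤ p ^ D.card := by
  refine (PEs_subset_le (fun e => ⟨(hρ e).1, (hρ e).2.trans hp1⟩) D).trans ?_
  rw [← Finset.prod_const]
  exact Finset.prod_le_prod (fun e _ => (hρ e).1) (fun e _ => (hρ e).2)

section OneStep

lemma E_inside {d p : ℝ} (hd : 0 < d) (hp1 : p ≤ 1) {H : Finset (Sym2 V)} {B : Finset V}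
  (hH : H ⊆ B.sym2) {T : Finset (Sym2 V)} (hT : Disjoint T B.sym2) {ρ : Sym2 V → ℝ}
  (hρ : ∀ e, 0 ≤ ρ e ∧ ρ e ≤ p)
    {x y : V} (hx : x ∈ B) (hy : y ∈ B) :
    PEs T ρ (fun S => gS d (H ∪ S) B x y) ≤ if x = y ∨ s(x, y) ∈ H then 1 else 0 := by
  rw [← PEs_const T ρ (if x = y ∨ s(x, y) ∈ H then 1 else 0)]
  refine le_of_eq (PEs_congr fun S hS => ?_)
  unfold gS
  rw [Finset.prod_eq_one]
  · have : s(x, y) ∉ S := fun h =>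
      Finset.disjoint_left.1 hT (hS h) (Finset.mk_mem_sym2_iff.2 ⟨hx, hy⟩)
    simp [this]
  · intro z hz
    have : z ∈ B := by
      simp at hz; rcases hz with rfl | rfl <;> assumption
    simp [rS, this]

lemma E_cross {d p : ℝ} (hd : 0 < d) (hp1 : p ≤ 1) {H : Finset (Sym2 V)} {B : Finset V}
  (hH : H ⊆ B.sym2) {T : Finset (Sym2 V)} (hT : Disjoint T B.sym2) {ρ : Sym2 V → ℝ}
  (hρ : ∀ e, 0 ≤ ρ e ∧ ρ e ≤ p)
    {x y : V} (hx : x ∈ B) (hy : y ∉ B) :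
    PEs T ρ (fun S => gS d (H ∪ S) B x y) ≤ p ^ 2 * (∑ u ∈ B, qS d H B u) + p * qS d H B x := by
  have hxy : x ≠ y := fun h => hy (h ▸ hx)
  have hr : ∀ e, 0 ≤ ρ e ∧ ρ e ≤ 1 := fun e => ⟨(hρ e).1, (hρ e).2.trans hp1⟩
  have hp0 : 0 ≤ p := (hρ s(x, y)).1.trans (hρ s(x, y)).2
  have h1 : PEs T ρ (fun S => gS d (H ∪ S) B x y) ≤
      PEs T ρ (fun S => ∑ u ∈ B, qS d H B u *
        (if ({s(u, y), s(x, y)} : Finset (Sym2 V)) ⊆ S then 1 else 0)) := by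
    refine PEs_le hr fun S hS => ?_
    have hS' : Disjoint S B.sym2 := Finset.disjoint_of_subset_left hS hT
    have h2 := rS_le hd hH hS' hy
    unfold gS
    rw [Finset.prod_pair hxy]
    have : rS d (H ∪ S) B x = 1 := by simp [rS, hx]
    rw [this, one_mul]
    simp only [hxy, false_or, mem_union_iff hH hy]
    by_cases h : s(x, y) ∈ S
    · simp only [h, if_true, one_mul]
      refine h2.trans (le_of_eq ?_)
      refine Finset.sum_congr rfl fun u _ => ?_
      simp [Finset.insert_subset_iff, h]
    · simp [Finset.insert_subset_iff, h]
  refine h1.trans ?_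
  rw [PEs_sum]
  have h3 : ∀ u ∈ B, PEs T ρ (fun S => qS d H B u *
        (if ({s(u, y), s(x, y)} : Finset (Sym2 V)) ⊆ S then 1 else 0)) ≤
        p ^ 2 * qS d H B u + if u = x then p * qS d H B x else 0 := by
    intro u hu
    rw [PEs_const_mul]
    have hq := qS_bounds hd H B u
    have h4 := prod_const_le (D := {s(u, y), s(x, y)}) hρ (T := T) hp1
    by_cases hux : u = x
    · subst hux
      have hc : ({s(u, y), s(u, y)} : Finset (Sym2 V)).card = 1 := by simp
      rw [hc, pow_one] at h4
      rw [if_pos rfl]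
      have := mul_le_mul_of_nonneg_left h4 hq.1
      have h5 : 0 ≤ p ^ 2 * qS d H B u := mul_nonneg (sq_nonneg p) hq.1
      linarith
    · have hc : ({s(u, y), s(x, y)} : Finset (Sym2 V)).card = 2 := by
        rw [Finset.card_pair]
        simp only [ne_eq, Sym2.eq_iff, hux, false_and, false_or, not_and]
        intro _ h'
        exact hxy h'.symm
      rw [hc] at h4
      rw [if_neg hux]
      have := mul_le_mul_of_nonneg_left h4 hq.1
      linarith
  refine (Finset.sum_le_sum h3).trans (le_of_eq ?_)
  rw [Finset.sum_add_distrib, ← Finset.mul_sum, Finset.sum_ite_eq' B x, if_pos hx]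

lemma E_out_diag {d p : ℝ} (hd : 0 < d) (hp1 : p ≤ 1) {H : Finset (Sym2 V)} {B : Finset V}
  (hH : H ⊆ B.sym2) {T : Finset (Sym2 V)} (hT : Disjoint T B.sym2) {ρ : Sym2 V → ℝ}
  (hρ : ∀ e, 0 ≤ ρ e ∧ ρ e ≤ p)
    {x : V} (hx : x ∉ B) :
    PEs T ρ (fun S => gS d (H ∪ S) B x x) ≤ p * (∑ u ∈ B, qS d H B u) := by
  have hr : ∀ e, 0 ≤ ρ e ∧ ρ e ≤ 1 := fun e => ⟨(hρ e).1, (hρ e).2.trans hp1⟩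
  have h1 : PEs T ρ (fun S => gS d (H ∪ S) B x x) ≤
      PEs T ρ (fun S => ∑ u ∈ B, qS d H B u *
        (if ({s(u, x)} : Finset (Sym2 V)) ⊆ S then 1 else 0)) := by
    refine PEs_le hr fun S hS => ?_
    have hS' : Disjoint S B.sym2 := Finset.disjoint_of_subset_left hS hT
    have h2 := rS_le hd hH hS' hx
    unfold gS
    simpa using h2
  refine h1.trans ?_
  rw [PEs_sum, Finset.mul_sum]
  refine Finset.sum_le_sum fun u hu => ?_
  rw [PEs_const_mul, mul_comm p]
  refine mul_le_mul_of_nonneg_left ?_ (qS_bounds hd H B u).1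
  simpa using prod_const_le (D := {s(u, x)}) hρ (T := T) hp1

lemma E_out {d p : ℝ} (hd : 0 < d) (hp1 : p ≤ 1) {H : Finset (Sym2 V)} {B : Finset V}
  (hH : H ⊆ B.sym2) {T : Finset (Sym2 V)} (hT : Disjoint T B.sym2) {ρ : Sym2 V → ℝ}
  (hρ : ∀ e, 0 ≤ ρ e ∧ ρ e ≤ p)
    {x y : V} (hx : x ∉ B) (hy : y ∉ B) (hxy : x ≠ y) :
    PEs T ρ (fun S => gS d (H ∪ S) B x y) ≤ p ^ 3 * (∑ u ∈ B, qS d H B u) ^ 2 := by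
  have hr : ∀ e, 0 ≤ ρ e ∧ ρ e ≤ 1 := fun e => ⟨(hρ e).1, (hρ e).2.trans hp1⟩
  have h1 : PEs T ρ (fun S => gS d (H ∪ S) B x y) ≤
      PEs T ρ (fun S => ∑ u ∈ B, ∑ u' ∈ B, (qS d H B u * qS d H B u') *
        (if ({s(u, x), s(u', y), s(x, y)} : Finset (Sym2 V)) ⊆ S then 1 else 0)) := by
    refine PEs_le hr fun S hS => ?_
    have hS' : Disjoint S B.sym2 := Finset.disjoint_of_subset_left hS hT
    have h2 := rS_le hd hH hS' hx
    have h3 := rS_le hd hH hS' hy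
    unfold gS
    rw [Finset.prod_pair hxy]
    simp only [hxy, false_or, mem_union_iff hH hy]
    by_cases h : s(x, y) ∈ S
    · simp only [h, if_true, one_mul]
      refine (mul_le_mul h2 h3 (rS_bounds hd _ _ _).1 ((rS_bounds hd _ _ _).1.trans h2)).trans
        (le_of_eq ?_)
      rw [Finset.sum_mul_sum]
      refine Finset.sum_congr rfl fun u _ => Finset.sum_congr rfl fun u' _ => ?_
      by_cases h4 : s(u, x) ∈ S <;> by_cases h5 : s(u', y) ∈ S <;>
        simp [Finset.insert_subset_iff, h, h4, h5]
    · simp [Finset.insert_subset_iff, h]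
  refine h1.trans ?_
  rw [PEs_sum, sq, Finset.sum_mul_sum, Finset.mul_sum]
  refine Finset.sum_le_sum fun u hu => ?_
  rw [PEs_sum, Finset.mul_sum]
  refine Finset.sum_le_sum fun u' hu' => ?_
  rw [PEs_const_mul, mul_comm (p ^ 3)]
  refine mul_le_mul_of_nonneg_left ?_
    (mul_nonneg (qS_bounds hd H B u).1 (qS_bounds hd H B u').1)
  have hc : ({s(u, x), s(u', y), s(x, y)} : Finset (Sym2 V)).card = 3 := by
    have hux : u ≠ x := fun h => hx (h ▸ hu)
    have huy : u ≠ y := fun h => hy (h ▸ hu)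
    have hux' : u' ≠ x := fun h => hx (h ▸ hu')
    have huy' : u' ≠ y := fun h => hy (h ▸ hu')
    rw [Finset.card_eq_three]
    refine ⟨_, _, _, ?_, ?_, ?_, rfl⟩
    · simp [hxy, hux, huy, hux', huy']
    · simp [hxy, hux, huy, hux', huy']
    · simp [hxy, hux, huy, hux', huy']
  rw [← hc]
  exact prod_const_le hρ hp1

lemma one_step {d p : ℝ} (hd : 0 < d) (hp1 : p ≤ 1) {H : Finset (Sym2 V)} {B : Finset V}
  (hH : H ⊆ B.sym2) {T : Finset (Sym2 V)} (hT : Disjoint T B.sym2) {ρ : Sym2 V → ℝ}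
  (hρ : ∀ e, 0 ≤ ρ e ∧ ρ e ≤ p)
    :
    PEs T ρ (fun S => PEs Finset.univ (rS d (H ∪ S) B) (XS (H ∪ S))) ≤
      XS H B + 3 * (Fintype.card V * (p * ∑ u ∈ B, qS d H B u)) +
      2 * (Fintype.card V * (p ^ 2 * ((B.card : ℝ) * ∑ u ∈ B, qS d H B u))) +
      (Fintype.card V) ^ 2 * (p ^ 3 * (∑ u ∈ B, qS d H B u) ^ 2) := by
  have hr : ∀ e, 0 ≤ ρ e ∧ ρ e ≤ 1 := fun e => ⟨(hρ e).1, (hρ e).2.trans hp1⟩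
  have hQ0 : 0 ≤ ∑ u ∈ B, qS d H B u := Finset.sum_nonneg fun u _ => (qS_bounds hd H B u).1
  have hcB : ((Bᶜ : Finset V).card : ℝ) ≤ Fintype.card V := by
    exact_mod_cast Finset.card_le_univ _
  by_cases hB : B = ∅
  · subst hB
    have : PEs T ρ (fun S => PEs Finset.univ (rS d (H ∪ S) ∅) (XS (H ∪ S))) ≤ 0 := by
      rw [← PEs_const T ρ 0]
      refine PEs_le hr fun S _ => ?_
      have hz : rS d (H ∪ S) (∅ : Finset V) = fun _ => 0 := by
        funext w; simp [rS]
      refine (inner_le hd _ _).trans (le_of_eq ?_)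
      refine Finset.sum_eq_zero fun x _ => Finset.sum_eq_zero fun y _ => ?_
      rw [hz]; simp
    simpa [XS] using this
  obtain ⟨b, hb⟩ := Finset.nonempty_iff_ne_empty.2 hB
  have hp0 : 0 ≤ p := (hρ s(b, b)).1.trans (hρ s(b, b)).2
  have h1 : PEs T ρ (fun S => PEs Finset.univ (rS d (H ∪ S) B) (XS (H ∪ S))) ≤
      ∑ x, ∑ y, PEs T ρ (fun S => gS d (H ∪ S) B x y) := by
    refine (PEs_le hr fun S _ => inner_le hd (H ∪ S) B).trans (le_of_eq ?_)
    rw [PEs_sum]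
    refine Finset.sum_congr rfl fun x _ => ?_
    rw [PEs_sum]; rfl
  refine h1.trans ?_
  set Q := ∑ u ∈ B, qS d H B u with hQ
  have hBB : ∑ x ∈ B, ∑ y ∈ B, PEs T ρ (fun S => gS d (H ∪ S) B x y) ≤ XS H B := by
    unfold XS
    refine Finset.sum_le_sum fun x hx => ?_
    unfold bS
    rw [Finset.card_filter]; push_cast
    exact Finset.sum_le_sum fun y hy => E_inside hd hp1 hH hT hρ hx hy
  have hBC : ∑ x ∈ B, ∑ y ∈ Bᶜ, PEs T ρ (fun S => gS d (H ∪ S) B x y) ≤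
      Fintype.card V * (p ^ 2 * ((B.card : ℝ) * Q)) + Fintype.card V * (p * Q) := by
    have : ∑ x ∈ B, ∑ y ∈ Bᶜ, PEs T ρ (fun S => gS d (H ∪ S) B x y) ≤
        ∑ x ∈ B, ∑ y ∈ Bᶜ, (p ^ 2 * Q + p * qS d H B x) :=
      Finset.sum_le_sum fun x hx => Finset.sum_le_sum fun y hy =>
        E_cross hd hp1 hH hT hρ hx (Finset.mem_compl.1 hy)
    refine this.trans ?_
    simp only [Finset.sum_const, nsmul_eq_mul]
    rw [← Finset.mul_sum, Finset.sum_add_distrib, Finset.sum_const, nsmul_eq_mul,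
      ← Finset.mul_sum, ← hQ]
    have h0 : 0 ≤ (B.card : ℝ) * (p ^ 2 * Q) + p * Q := by positivity
    have := mul_le_mul_of_nonneg_right hcB h0
    linarith
  have hCB : ∑ x ∈ Bᶜ, ∑ y ∈ B, PEs T ρ (fun S => gS d (H ∪ S) B x y) ≤
      Fintype.card V * (p ^ 2 * ((B.card : ℝ) * Q)) + Fintype.card V * (p * Q) := by
    rw [Finset.sum_comm]
    refine le_trans (le_of_eq ?_) hBC
    refine Finset.sum_congr rfl fun x _ => Finset.sum_congr rfl fun y _ => ?_
    congr 1; funext S; exact gS_symm _ _ _ _ _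
  have hCC : ∑ x ∈ Bᶜ, ∑ y ∈ Bᶜ, PEs T ρ (fun S => gS d (H ∪ S) B x y) ≤
      Fintype.card V * (p * Q) + (Fintype.card V) ^ 2 * (p ^ 3 * Q ^ 2) := by
    have : ∑ x ∈ Bᶜ, ∑ y ∈ Bᶜ, PEs T ρ (fun S => gS d (H ∪ S) B x y) ≤
        ∑ x ∈ Bᶜ, ∑ y ∈ Bᶜ, ((if x = y then p * Q else 0) + p ^ 3 * Q ^ 2) := by
      refine Finset.sum_le_sum fun x hx => Finset.sum_le_sum fun y hy => ?_
      rw [Finset.mem_compl] at hx hy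
      by_cases hxy : x = y
      · subst hxy
        rw [if_pos rfl]
        have := E_out_diag hd hp1 hH hT hρ hx
        have h0 : 0 ≤ p ^ 3 * Q ^ 2 := by positivity
        linarith
      · rw [if_neg hxy, zero_add]
        exact E_out hd hp1 hH hT hρ hx hy hxy
    refine this.trans ?_
    simp only [Finset.sum_add_distrib, Finset.sum_ite_eq, Finset.sum_const, nsmul_eq_mul]
    have e1 : ∑ x ∈ Bᶜ, (if x ∈ Bᶜ then p * Q else 0) = (Bᶜ : Finset V).card * (p * Q) := by
      rw [Finset.sum_congr rfl fun x hx => if_pos hx, Finset.sum_const, nsmul_eq_mul]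
    rw [e1]
    have h0 : 0 ≤ p * Q := by positivity
    have h00 : 0 ≤ p ^ 3 * Q ^ 2 := by positivity
    have := mul_le_mul_of_nonneg_right hcB h0
    have h5 : ((Bᶜ : Finset V).card : ℝ) * (((Bᶜ : Finset V).card : ℝ) * (p ^ 3 * Q ^ 2)) ≤
        (Fintype.card V) ^ 2 * (p ^ 3 * Q ^ 2) := by
      rw [← mul_assoc, sq (Fintype.card V : ℝ)]
      refine mul_le_mul_of_nonneg_right ?_ h00
      exact mul_le_mul hcB hcB (by positivity) (by positivity)
    linarith
  have hsplit : ∀ f : V → ℝ, ∑ x, f x = ∑ x ∈ B, f x + ∑ x ∈ Bᶜ, f x := fun f =>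
    (Finset.sum_add_sum_compl B f).symm
  rw [hsplit]
  simp only [hsplit (fun y => PEs T ρ (fun S => gS d (H ∪ S) B _ y)), Finset.sum_add_distrib]
  linarith

end OneStep

lemma card_le_XS (H : Finset (Sym2 V)) (B : Finset V) : (B.card : ℝ) ≤ XS H B := by
  unfold XS
  rw [Finset.card_eq_sum_ones]
  push_cast
  refine Finset.sum_le_sum fun u hu => ?_
  have : 1 ≤ bS H B u := by
    unfold bS
    exact Finset.card_pos.2 ⟨u, by simp [hu]⟩
  exact_mod_cast this

lemma one_step' {d p κ η γ M : ℝ} (hd : 0 < d) (hp0 : 0 ≤ p) (hp1 : p ≤ 1)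
    (hκ : (Fintype.card V : ℝ) * p ≤ κ * d) (hκ0 : 0 ≤ κ) (hη : p * M ≤ η)
    (hγ : 1 + 3 * κ + (2 * κ + κ ^ 2) * η ≤ γ)
    {H : Finset (Sym2 V)} {B : Finset V}
    (hH : H ⊆ B.sym2) {T : Finset (Sym2 V)} (hT : Disjoint T B.sym2) {ρ : Sym2 V → ℝ}
    (hρ : ∀ e, 0 ≤ ρ e ∧ ρ e ≤ p) (hX : XS H B ≤ M) :
    PEs T ρ (fun S => PEs Finset.univ (rS d (H ∪ S) B) (XS (H ∪ S))) ≤ γ * XS H B := by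
  refine (one_step hd hp1 hH hT hρ).trans ?_
  have hQ0 : 0 ≤ ∑ u ∈ B, qS d H B u := Finset.sum_nonneg fun u _ => (qS_bounds hd H B u).1
  have hQX : ∑ u ∈ B, qS d H B u ≤ XS H B / d := by
    unfold XS
    rw [Finset.sum_div]
    exact Finset.sum_le_sum fun u _ => min_le_right _ _
  have hBX := card_le_XS H B
  have hX0 : 0 ≤ XS H B := le_trans (by positivity) hBX
  set Q := ∑ u ∈ B, qS d H B u
  set X := XS H B
  set N : ℝ := (Fintype.card V : ℝ)
  have hN0 : 0 ≤ N := by positivity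
  have h1 : N * p * Q ≤ κ * X := by
    calc N * p * Q ≤ (κ * d) * (X / d) := mul_le_mul hκ hQX hQ0 (by positivity)
      _ = κ * X := by field_simp
  have h10 : 0 ≤ N * p * Q := by positivity
  have hpX : p * X ≤ η := (mul_le_mul_of_nonneg_left hX hp0).trans hη
  have hpX0 : 0 ≤ p * X := by positivity
  have h2 : (p * (B.card : ℝ)) * (N * p * Q) ≤ η * (κ * X) := by
    refine mul_le_mul ((mul_le_mul_of_nonneg_left hBX hp0).trans hpX) h1 h10 (by linarith)
  have h3 : p * (N * p * Q) ^ 2 ≤ κ ^ 2 * η * X := by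
    calc p * (N * p * Q) ^ 2 ≤ p * (κ * X) ^ 2 := by gcongr
      _ = κ ^ 2 * X * (p * X) := by ring
      _ ≤ κ ^ 2 * X * η := by gcongr
      _ = _ := by ring
  have h4 := mul_le_mul_of_nonneg_right hγ hX0
  nlinarith

/-- Factorisation of the transition weight. -/
lemma step_factor {d : ℝ} (hd : 0 < d) {H' S2 : Finset (Sym2 V)} {B B' : Finset V} (hBB : B ⊆ B')
    (hH : H' ⊆ B'.sym2) (hS : Disjoint S2 B'.sym2) :
    (∏ w ∈ B', rS d (H' ∪ S2) B w) * ∏ w ∈ Finset.univ \ B', (1 - rS d (H' ∪ S2) B w) =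
      (∏ w ∈ B', rS d H' B w) * ∏ e ∈ S2, (1 - (1 - ∏ w ∈ Finset.univ \ B', ∏ u ∈ B,
        (if e = s(u, w) then 1 - qS d H' B u else 1))) := by
  have hS0 : Disjoint S2 B.sym2 :=
    Finset.disjoint_of_subset_right (Finset.sym2_mono hBB) hS
  congr 1
  · refine Finset.prod_congr rfl fun w hw => ?_
    unfold rS
    split_ifs with hwB
    · rfl
    · congr 1
      refine Finset.prod_congr rfl fun u hu => ?_
      rw [qS_union hS0 hu]
      have : s(u, w) ∉ S2 := fun h =>
        Finset.disjoint_left.1 hS h (Finset.mk_mem_sym2_iff.2 ⟨hBB hu, hw⟩)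
      simp [this]
  · simp only [sub_sub_cancel]
    rw [Finset.prod_comm]
    refine Finset.prod_congr rfl fun w hw => ?_
    have hw' : w ∉ B' := (Finset.mem_sdiff.1 hw).2
    have hwB : w ∉ B := fun h => hw' (hBB h)
    rw [Finset.prod_comm]
    unfold rS
    rw [if_neg hwB, sub_sub_cancel]
    refine Finset.prod_congr rfl fun u hu => ?_
    rw [qS_union hS0 hu, Finset.prod_ite_eq']
    simp only [mem_union_iff hH hw']
    split_ifs <;> simp

lemma annealed {d p κ η γ M : ℝ} (hd : 0 < d) (hp0 : 0 ≤ p) (hp1 : p < 1)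
    (hκ : (Fintype.card V : ℝ) * p ≤ κ * d) (hκ0 : 0 ≤ κ) (hη : p * M ≤ η)
    (hγ : 1 + 3 * κ + (2 * κ + κ ^ 2) * η ≤ γ) (hγ1 : 1 ≤ γ) (hM : 0 < M)
    (hMN : M ≤ Fintype.card V) (T₀ : Finset (Sym2 V)) (ℓ : ℕ) :
    ∀ (B : Finset V) (H : Finset (Sym2 V)) (ρ : Sym2 V → ℝ), H ⊆ B.sym2 →
      (∀ e, 0 ≤ ρ e ∧ ρ e ≤ p) →
      PEs (T₀ \ B.sym2) ρ (fun S => FS d (H ∪ S) ℓ B) ≤ γ ^ ℓ / M * XS H B := by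
  induction ℓ with
  | zero =>
    intro B H ρ hH hρ
    simp only [FS]
    rw [PEs_const]
    have hBX := card_le_XS H B
    have hX0 : 0 ≤ XS H B := le_trans (by positivity) hBX
    split_ifs with h
    · rw [pow_zero, one_div_mul_eq_div, le_div_iff₀ hM, one_mul]
      refine hMN.trans (le_trans ?_ hBX)
      rw [h, Finset.card_univ]
    · positivity
  | succ ℓ ih =>
    intro B H ρ hH hρ
    have hr : ∀ e, 0 ≤ ρ e ∧ ρ e ≤ 1 := fun e => ⟨(hρ e).1, (hρ e).2.trans hp1.le⟩
    by_cases hX : XS H B ≤ M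
    swap
    · push Not at hX
      have : PEs (T₀ \ B.sym2) ρ (fun S => FS d (H ∪ S) (ℓ + 1) B) ≤ 1 := by
        rw [← PEs_const (T₀ \ B.sym2) ρ 1]
        exact PEs_le hr fun S _ => (FS_bounds hd _ _ _).2
      refine this.trans ?_
      rw [div_mul_eq_mul_div, le_div_iff₀ hM, one_mul]
      have h1 : (1 : ℝ) ≤ γ ^ (ℓ + 1) := one_le_pow₀ hγ1
      nlinarith
    set T := T₀ \ B.sym2 with hTdef
    have hT : Disjoint T B.sym2 := Finset.sdiff_disjoint
    set K := γ ^ ℓ / M with hK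
    have hK0 : 0 ≤ K := by positivity
    have hA : PEs T ρ (fun S => FS d (H ∪ S) (ℓ + 1) B) ≤
        PEs T ρ (fun S => K * PEs Finset.univ (rS d (H ∪ S) B) (XS (H ∪ S))) := by
      have e1 : ∀ S, FS d (H ∪ S) (ℓ + 1) B = ∑ B' ∈ (Finset.univ : Finset V).powerset,
          ((∏ w ∈ B', rS d (H ∪ S) B w) * ∏ w ∈ Finset.univ \ B', (1 - rS d (H ∪ S) B w)) *
            FS d (H ∪ S) ℓ B' := fun S => rfl
      have e2 : ∀ S, K * PEs Finset.univ (rS d (H ∪ S) B) (XS (H ∪ S)) =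
          ∑ B' ∈ (Finset.univ : Finset V).powerset,
          ((∏ w ∈ B', rS d (H ∪ S) B w) * ∏ w ∈ Finset.univ \ B', (1 - rS d (H ∪ S) B w)) *
            (K * XS (H ∪ S) B') := fun S => by
        unfold PEs
        rw [Finset.mul_sum]
        exact Finset.sum_congr rfl fun _ _ => by ring
      simp only [e1, e2]
      rw [PEs_sum, PEs_sum]
      refine Finset.sum_le_sum fun B' _ => ?_
      by_cases hBB : B ⊆ B'
      swap
      · obtain ⟨b, hb, hb'⟩ := Finset.not_subset.1 hBB
        have hz : ∀ S, ∏ w ∈ Finset.univ \ B', (1 - rS d (H ∪ S) B w) = 0 := fun S =>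
          Finset.prod_eq_zero (i := b) (by simp [hb']) (by simp [rS, hb])
        simp [hz]
      have hsub : B.sym2 ⊆ B'.sym2 := Finset.sym2_mono hBB
      have hTu : T = (T ∩ B'.sym2) ∪ (T₀ \ B'.sym2) := by
        ext e
        simp only [hTdef, Finset.mem_union, Finset.mem_inter, Finset.mem_sdiff]
        have := @hsub e
        tauto
      have hdis : Disjoint (T ∩ B'.sym2) (T₀ \ B'.sym2) :=
        Finset.disjoint_of_subset_left Finset.inter_subset_right Finset.disjoint_sdiff
      rw [hTu, PEs_union hdis, PEs_union hdis]
      refine PEs_le hr fun S1 hS1 => ?_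
      set H' := H ∪ S1 with hH'
      have hH'sub : H' ⊆ B'.sym2 :=
        Finset.union_subset (hH.trans hsub) (hS1.trans Finset.inter_subset_right)
      set c : Sym2 V → ℝ := fun e => 1 - ∏ w ∈ Finset.univ \ B', ∏ u ∈ B,
        (if e = s(u, w) then 1 - qS d H' B u else 1) with hc
      have hterm : ∀ e u w, 0 ≤ (if e = s(u, w) then 1 - qS d H' B u else 1) ∧
          (if e = s(u, w) then 1 - qS d H' B u else 1) ≤ 1 := by
        intro e u w
        have := qS_bounds hd H' B u
        split_ifs
        · constructor <;> linarith
        · simp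
      have hcb : ∀ e, 0 ≤ c e ∧ c e ≤ 1 := by
        intro e
        have i0 : 0 ≤ ∏ w ∈ Finset.univ \ B', ∏ u ∈ B,
            (if e = s(u, w) then 1 - qS d H' B u else 1) :=
          Finset.prod_nonneg fun w _ => Finset.prod_nonneg fun u _ => (hterm e u w).1
        have i1 : ∏ w ∈ Finset.univ \ B', ∏ u ∈ B,
            (if e = s(u, w) then 1 - qS d H' B u else 1) ≤ 1 :=
          Finset.prod_le_one
            (fun w _ => Finset.prod_nonneg fun u _ => (hterm e u w).1)
            (fun w _ => Finset.prod_le_one (fun u _ => (hterm e u w).1) fun u _ => (hterm e u w).2)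
        simp only [hc]
        constructor <;> linarith
      set A := ∏ w ∈ B', rS d H' B w with hAdef
      have hA0 : 0 ≤ A := Finset.prod_nonneg fun w _ => (rS_bounds hd _ _ _).1
      have hfac : ∀ S2 ⊆ T₀ \ B'.sym2,
          (∏ w ∈ B', rS d (H ∪ (S1 ∪ S2)) B w) *
            ∏ w ∈ Finset.univ \ B', (1 - rS d (H ∪ (S1 ∪ S2)) B w) =
          A * ∏ e ∈ S2, (1 - c e) := by
        intro S2 hS2
        rw [← Finset.union_assoc]
        exact step_factor hd hBB hH'sub
          (Finset.disjoint_of_subset_left hS2 Finset.sdiff_disjoint)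
      have hpc : ∀ e, 0 < 1 - ρ e * c e := by
        intro e
        have := mul_le_mul (hρ e).2 (hcb e).2 (hcb e).1 hp0
        linarith
      have L1 : PEs (T₀ \ B'.sym2) ρ (fun S2 =>
          ((∏ w ∈ B', rS d (H ∪ (S1 ∪ S2)) B w) *
            ∏ w ∈ Finset.univ \ B', (1 - rS d (H ∪ (S1 ∪ S2)) B w)) *
            FS d (H ∪ (S1 ∪ S2)) ℓ B') =
          A * PEs (T₀ \ B'.sym2) ρ (fun S2 => (∏ e ∈ S2, (1 - c e)) * FS d (H' ∪ S2) ℓ B') := by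
        rw [← PEs_const_mul]
        refine PEs_congr fun S2 hS2 => ?_
        rw [hfac S2 hS2, hH', Finset.union_assoc]; ring
      have L2 : PEs (T₀ \ B'.sym2) ρ (fun S2 =>
          ((∏ w ∈ B', rS d (H ∪ (S1 ∪ S2)) B w) *
            ∏ w ∈ Finset.univ \ B', (1 - rS d (H ∪ (S1 ∪ S2)) B w)) *
            (K * XS (H ∪ (S1 ∪ S2)) B')) =
          A * PEs (T₀ \ B'.sym2) ρ (fun S2 => (∏ e ∈ S2, (1 - c e)) * (K * XS H' B')) := by
        rw [← PEs_const_mul]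
        refine PEs_congr fun S2 hS2 => ?_
        rw [hfac S2 hS2, ← Finset.union_assoc, ← hH',
          XS_union (Finset.disjoint_of_subset_left hS2 Finset.sdiff_disjoint)]; ring
      rw [L1, L2]
      refine mul_le_mul_of_nonneg_left ?_ hA0
      rw [PEs_tilt (fun e => (hpc e).ne'), PEs_tilt (fun e => (hpc e).ne')]
      refine mul_le_mul_of_nonneg_left ?_ (Finset.prod_nonneg fun e _ => (hpc e).le)
      rw [PEs_const]
      refine ih B' H' _ hH'sub fun e => ⟨?_, ?_⟩
      · exact div_nonneg (mul_nonneg (hρ e).1 (sub_nonneg.2 (hcb e).2)) (hpc e).le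
      · refine le_trans ?_ (hρ e).2
        rw [div_le_iff₀ (hpc e)]
        have := hr e
        have := hcb e
        have : 0 ≤ ρ e * c e := mul_nonneg (hr e).1 (hcb e).1
        nlinarith [mul_nonneg this (sub_nonneg.2 (hr e).2)]
    refine hA.trans ?_
    rw [PEs_const_mul]
    have := mul_le_mul_of_nonneg_left
      (one_step' hd hp0 hp1.le hκ hκ0 hη hγ hH hT hρ hX) hK0
    refine this.trans (le_of_eq ?_)
    rw [hK, pow_succ]; ring

end Annealed

section Compare

set_option linter.unusedSectionVars false

variable {V : Type*} [Fintype V] [DecidableEq V]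

/-- Recursive form of the completion probability. -/
noncomputable def Rp (G : SimpleGraph V) : ℕ → Finset V → ℝ
  | 0, B => if Finset.univ ⊆ B then 1 else 0
  | ℓ + 1, B => ∑ B', stepOfQ (edgeForceProb G B) B B' * Rp G ℓ B'

lemma traj_eq (G : SimpleGraph V) (ℓ : ℕ) : ∀ (h : List (Finset V)) (S : Finset V),
    (∑ f : Fin ℓ → Finset V, if Finset.univ ⊆ (S :: List.ofFn f).getLastD ∅ then
      seqProbAux (stdStep G) (h ++ [S]) (List.ofFn f) else 0) = Rp G ℓ S := by
  induction ℓ with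
  | zero =>
    intro h S
    simp [Rp, seqProbAux]
  | succ ℓ ih =>
    intro h S
    rw [← (Fin.consEquiv (fun _ : Fin (ℓ + 1) => Finset V)).sum_comp, Fintype.sum_prod_type]
    simp only [Rp]
    refine Finset.sum_congr rfl fun B' _ => ?_
    rw [← ih (h ++ [S]) B', Finset.mul_sum]
    refine Finset.sum_congr rfl fun f _ => ?_
    have e1 : List.ofFn ((Fin.consEquiv (fun _ : Fin (ℓ + 1) => Finset V)) (B', f)) =
        B' :: List.ofFn f := by
      simp [Fin.consEquiv, List.ofFn_succ]
    rw [e1]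
    have e2 : (S :: B' :: List.ofFn f).getLastD ∅ = (B' :: List.ofFn f).getLastD ∅ := by
      simp
    rw [e2]
    have e3 : seqProbAux (stdStep G) (h ++ [S]) (B' :: List.ofFn f) =
        stepOfQ (edgeForceProb G S) S B' *
          seqProbAux (stdStep G) (h ++ [S] ++ [B']) (List.ofFn f) := by
      simp [seqProbAux, stdStep]
    rw [e3]
    split_ifs <;> simp

lemma probAllBlue_eq (G : SimpleGraph V) (S : Finset V) (ℓ : ℕ) :
    probAllBlue G S ℓ = Rp G ℓ S := by
  rw [← traj_eq G ℓ [] S]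
  unfold probAllBlue probForced trajEventProb
  refine Finset.sum_congr rfl fun f _ => ?_
  congr

/-- one round blue probability, real process -/
noncomputable def rQ (q : V → V → ℝ) (B : Finset V) (w : V) : ℝ :=
  if w ∈ B then 1 else 1 - ∏ u ∈ B, (1 - q u w)

lemma step_eq (q : V → V → ℝ) (B B' : Finset V) :
    stepOfQ q B B' = (∏ w ∈ B', rQ q B w) * ∏ w ∈ Finset.univ \ B', (1 - rQ q B w) := by
  unfold stepOfQ
  split_ifs with h
  · congr 1
    · rw [← Finset.prod_sdiff h]
      have : ∏ w ∈ B, rQ q B w = 1 := Finset.prod_eq_one fun w hw => by simp [rQ, hw]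
      rw [this, mul_one]
      refine Finset.prod_congr rfl fun w hw => ?_
      simp [rQ, (Finset.mem_sdiff.1 hw).2]
    · rw [← Finset.compl_eq_univ_sdiff]
      refine Finset.prod_congr rfl fun w hw => ?_
      have : w ∉ B := fun h' => Finset.mem_compl.1 hw (h h')
      simp [rQ, this]
  · obtain ⟨b, hb, hb'⟩ := Finset.not_subset.1 h
    rw [Finset.prod_eq_zero (s := Finset.univ \ B') (i := b) (by simp [hb']) (by simp [rQ, hb]),
      mul_zero]

lemma Rp_succ (G : SimpleGraph V) (ℓ : ℕ) (B : Finset V) :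
    Rp G (ℓ + 1) B = PEs Finset.univ (rQ (edgeForceProb G B) B) (Rp G ℓ) := by
  simp only [Rp, PEs, Finset.powerset_univ]
  exact Finset.sum_congr rfl fun B' _ => by rw [step_eq]

lemma closedDegIn_eq {G : SimpleGraph V} {S : Finset (Sym2 V)} (hS : ∀ e, e ∈ S ↔ e ∈ G.edgeSet)
    {B : Finset V} {u : V} : closedDegIn G B u = bS S B u := by
  unfold closedDegIn bS
  rw [← Set.ncard_coe_finset]
  congr 1
  ext x
  simp only [Set.mem_inter_iff, Set.mem_insert_iff, SimpleGraph.mem_neighborSet,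
    Finset.coe_filter, Set.mem_ofPred_eq, hS, SimpleGraph.mem_edgeSet, Finset.mem_coe]
  rw [eq_comm (a := x)]
  tauto

lemma closedDegIn_le {G : SimpleGraph V} {B : Finset V} {u w : V} (h : G.Adj u w) (hw : w ∉ B) :
    closedDegIn G B u ≤ deg G u := by
  unfold closedDegIn deg
  have h1 : (insert u (G.neighborSet u)) ∩ (B : Set V) ⊆ insert u (G.neighborSet u \ {w}) := by
    rintro x ⟨hx, hxB⟩
    rcases hx with rfl | hx
    · exact Or.inl rfl
    · refine Or.inr ⟨hx, ?_⟩
      rintro rfl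
      exact hw hxB
  refine (Set.ncard_le_ncard h1 (Set.toFinite _)).trans ?_
  refine (Set.ncard_insert_le _ _).trans ?_
  rw [Set.ncard_sdiff_singleton_add_one (by exact h) (Set.toFinite _)]

lemma edgeForce_bounds (G : SimpleGraph V) (B : Finset V) (u w : V) :
    0 ≤ edgeForceProb G B u w ∧ edgeForceProb G B u w ≤ 1 := by
  unfold edgeForceProb
  split_ifs with h
  · refine ⟨by positivity, ?_⟩
    refine div_le_one_of_le₀ ?_ (by positivity)
    exact_mod_cast closedDegIn_le h.1 h.2.2
  · simp

lemma edgeForce_le {d : ℝ} (hd : 0 < d) {G : SimpleGraph V} {S : Finset (Sym2 V)}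
    (hS : ∀ e, e ∈ S ↔ e ∈ G.edgeSet) (hdeg : ∀ u, d ≤ deg G u) (B : Finset V) (u w : V) :
    edgeForceProb G B u w ≤ if s(u, w) ∈ S then qS d S B u else 0 := by
  by_cases h : G.Adj u w
  · have hm : s(u, w) ∈ S := (hS _).2 h
    rw [if_pos hm]
    refine le_min (edgeForce_bounds G B u w).2 ?_
    unfold edgeForceProb
    split_ifs with h1
    · rw [closedDegIn_eq hS]
      have := hdeg u
      gcongr
    · positivity
  · have hm : s(u, w) ∉ S := fun h' => h ((hS _).1 h')
    rw [if_neg hm]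
    unfold edgeForceProb
    rw [if_neg (fun h' => h h'.1)]

lemma rQ_bounds {q : V → V → ℝ} (hq : ∀ u w, 0 ≤ q u w ∧ q u w ≤ 1) (B : Finset V) (w : V) :
    0 ≤ rQ q B w ∧ rQ q B w ≤ 1 := by
  unfold rQ
  split_ifs
  · simp
  · have h0 : 0 ≤ ∏ u ∈ B, (1 - q u w) :=
      Finset.prod_nonneg fun u _ => by linarith [(hq u w).2]
    have h1 : ∏ u ∈ B, (1 - q u w) ≤ 1 :=
      Finset.prod_le_one (fun u _ => by linarith [(hq u w).2])
        (fun u _ => by linarith [(hq u w).1])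
    constructor <;> linarith

lemma Rp_bounds (G : SimpleGraph V) (ℓ : ℕ) : ∀ B, 0 ≤ Rp G ℓ B ∧ Rp G ℓ B ≤ 1 := by
  induction ℓ with
  | zero =>
    intro B
    simp only [Rp]
    split_ifs <;> norm_num
  | succ ℓ ih =>
    intro B
    rw [Rp_succ]
    have hr := rQ_bounds (edgeForce_bounds G B) B
    refine ⟨PEs_nonneg hr fun T _ => (ih T).1, ?_⟩
    rw [← PEs_const Finset.univ (rQ (edgeForceProb G B) B) 1]
    exact PEs_le hr fun T _ => (ih T).2

lemma Rp_le_FS {d : ℝ} (hd : 0 < d) {G : SimpleGraph V} {S : Finset (Sym2 V)}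
    (hS : ∀ e, e ∈ S ↔ e ∈ G.edgeSet) (hdeg : ∀ u, d ≤ deg G u) (ℓ : ℕ) :
    ∀ B, Rp G ℓ B ≤ FS d S ℓ B := by
  induction ℓ with
  | zero =>
    intro B
    simp [Rp, FS, Finset.univ_subset_iff]
  | succ ℓ ih =>
    intro B
    rw [Rp_succ]
    simp only [FS]
    have hr := rQ_bounds (edgeForce_bounds G B) B
    refine (PEs_le hr fun T _ => ih T).trans ?_
    refine PEs_mono hr (rS_bounds hd S B) (fun w => ?_) (FS_mono hd S ℓ)
    unfold rQ rS
    split_ifs with hw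
    · exact le_rfl
    · refine sub_le_sub_left ?_ 1
      refine Finset.prod_le_prod (fun u _ => by linarith [(qite_bounds hd S B u w).2]) ?_
      intro u _
      linarith [edgeForce_le hd hS hdeg B u w]

/-- edges of the complete graph -/
noncomputable def topE (V : Type*) [Fintype V] [DecidableEq V] : Finset (Sym2 V) :=
  Finset.univ.filter (fun e => e ∈ (⊤ : SimpleGraph V).edgeSet)

/-- edges of `G` -/
noncomputable def edg (G : SimpleGraph V) : Finset (Sym2 V) :=
  Finset.univ.filter (fun e => e ∈ G.edgeSet)

lemma mem_edg (G : SimpleGraph V) (e : Sym2 V) : e ∈ edg G ↔ e ∈ G.edgeSet := by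
  simp [edg]

lemma deg_eq (G : SimpleGraph V) (u : V) : deg G u = ((edg G).filter (fun e => u ∈ e)).card := by
  have h1 : deg G u = G.degree u := by
    unfold deg
    rw [Set.ncard_eq_toFinset_card', ← SimpleGraph.card_neighborFinset_eq_degree]
    rfl
  rw [h1, ← SimpleGraph.card_incidenceFinset_eq_degree]
  congr 1
  ext e
  simp [edg, SimpleGraph.incidenceSet]

lemma topE_deg (u : V) : ((topE V).filter (fun e => u ∈ e)).card = Fintype.card V - 1 := by
  have : topE V = edg (⊤ : SimpleGraph V) := by
    ext e; simp [topE, edg]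
  rw [this, ← deg_eq]
  unfold deg
  rw [Set.ncard_eq_toFinset_card']
  have := SimpleGraph.complete_graph_degree u
  rw [← SimpleGraph.card_neighborFinset_eq_degree] at this
  convert this
  ext x; simp [SimpleGraph.completeGraph]

lemma topE_card : (topE V).card = (Fintype.card V).choose 2 := by
  rw [← SimpleGraph.card_edgeFinset_top_eq_card_choose_two]
  congr 1
  ext e; simp [topE]

lemma sum_graph {n : ℕ} (p : ℝ) (f : Finset (Sym2 (Fin n)) → ℝ) :
    ∑ G : SimpleGraph (Fin n), erProb n p G * f (edg G) = PEs (topE (Fin n)) (fun _ => p) f := by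
  unfold PEs
  refine Finset.sum_nbij' edg (fun S => SimpleGraph.fromEdgeSet (S : Set (Sym2 (Fin n))))
    ?_ ?_ ?_ ?_ ?_
  · intro G _
    rw [Finset.mem_powerset]
    intro e he
    simp only [topE, Finset.mem_filter, Finset.mem_univ, true_and]
    exact SimpleGraph.edgeSet_mono le_top ((mem_edg G e).1 he)
  · intro S _; exact Finset.mem_univ _
  · intro G _
    have : ((edg G : Finset _) : Set (Sym2 (Fin n))) = G.edgeSet := by
      ext e; simp [edg]
    rw [this, SimpleGraph.fromEdgeSet_edgeSet]
  · intro S hS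
    ext e
    rw [mem_edg, SimpleGraph.edgeSet_fromEdgeSet]
    have := Finset.mem_powerset.1 hS
    constructor
    · rintro ⟨h, _⟩; exact h
    · intro h
      refine ⟨h, ?_⟩
      have h2 := this h
      simpa [topE] using h2
  · intro G _
    have hsub : edg G ⊆ topE (Fin n) := by
      intro e he
      simp only [topE, Finset.mem_filter, Finset.mem_univ, true_and]
      exact SimpleGraph.edgeSet_mono le_top ((mem_edg G e).1 he)
    have hc : G.edgeSet.ncard = (edg G).card := by
      rw [← Set.ncard_coe_finset]
      congr 1
      ext e; simp [edg]
    rw [Finset.prod_const, Finset.prod_const, Finset.card_sdiff_of_subset hsub, topE_card,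
      Fintype.card_fin]
    unfold erProb
    rw [hc]

lemma chernoff {p : ℝ} (hp0 : 0 ≤ p) (hp1 : p ≤ 1) (hN : 1 ≤ Fintype.card V) {δ : ℝ}
    (hδ : 0 < δ) (hδ1 : δ < 1) (u : V) :
    PEs (topE V) (fun _ => p) (fun S =>
      if ((S.filter (fun e => u ∈ e)).card : ℝ) < (1 - δ) * (((Fintype.card V : ℝ) - 1) * p)
        then 1 else 0) ≤
      Real.exp (-(δ ^ 2 / 2 * (((Fintype.card V : ℝ) - 1) * p))) := by
  set m : ℝ := ((Fintype.card V : ℝ) - 1) * p with hm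
  have hN' : (1 : ℝ) ≤ Fintype.card V := by exact_mod_cast hN
  have hm0 : 0 ≤ m := mul_nonneg (by linarith) hp0
  set c : Sym2 V → ℝ := fun e => if u ∈ e then 1 - Real.exp (-δ) else 0 with hc
  have hexp1 : Real.exp (-δ) < 1 := by rw [Real.exp_lt_one_iff]; linarith
  have hexp0 := Real.exp_pos (-δ)
  have hpc : ∀ e, 0 < 1 - p * c e := by
    intro e
    simp only [hc]
    split_ifs
    · nlinarith
    · simp
  have h1 : PEs (topE V) (fun _ => p) (fun S =>
      if ((S.filter (fun e => u ∈ e)).card : ℝ) < (1 - δ) * m then 1 else 0) ≤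
      PEs (topE V) (fun _ => p)
        (fun S => (∏ e ∈ S, (1 - c e)) * Real.exp (δ * ((1 - δ) * m))) := by
    refine PEs_le (fun _ => ⟨hp0, hp1⟩) fun S _ => ?_
    have e1 : ∏ e ∈ S, (1 - c e) = Real.exp (-δ) ^ (S.filter (fun e => u ∈ e)).card := by
      rw [← Finset.prod_const, Finset.prod_filter]
      refine Finset.prod_congr rfl fun e _ => ?_
      simp only [hc]
      split_ifs <;> ring
    rw [e1, ← Real.exp_nat_mul, ← Real.exp_add]
    split_ifs with h
    · rw [Real.one_le_exp_iff]
      nlinarith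
    · positivity
  refine h1.trans ?_
  rw [PEs_tilt (fun e => (hpc e).ne'), PEs_const]
  have e2 : ∏ e ∈ topE V, (1 - p * c e) = (1 - p * (1 - Real.exp (-δ))) ^ (Fintype.card V - 1) := by
    rw [← topE_deg u, ← Finset.prod_const, Finset.prod_filter]
    refine Finset.prod_congr rfl fun e _ => ?_
    simp only [hc]
    split_ifs <;> ring
  rw [e2]
  have h2 : (1 - p * (1 - Real.exp (-δ))) ^ (Fintype.card V - 1) ≤
      Real.exp (-(m * (1 - Real.exp (-δ)))) := by
    have h3 : 1 - p * (1 - Real.exp (-δ)) ≤ Real.exp (-(p * (1 - Real.exp (-δ)))) := by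
      have := Real.add_one_le_exp (-(p * (1 - Real.exp (-δ))))
      linarith
    have h4 : 0 ≤ 1 - p * (1 - Real.exp (-δ)) := by nlinarith
    refine (pow_le_pow_left₀ h4 h3 _).trans (le_of_eq ?_)
    rw [← Real.exp_nat_mul, Nat.cast_sub hN, hm]
    congr 1
    push_cast
    ring
  refine (mul_le_mul_of_nonneg_right h2 (Real.exp_pos _).le).trans ?_
  rw [← Real.exp_add, Real.exp_le_exp]
  have h5 : Real.exp (-δ) ≤ 1 - δ + δ ^ 2 / 2 := by
    have h6 := Real.quadratic_le_exp_of_nonneg hδ.le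
    rw [Real.exp_neg, inv_le_iff_one_le_mul₀ (Real.exp_pos δ)]
    have h7 : 0 ≤ 1 - δ + δ ^ 2 / 2 := by nlinarith [sq_nonneg (1 - δ)]
    have h8 := mul_le_mul_of_nonneg_left h6 h7
    nlinarith [sq_nonneg (δ ^ 2)]
  nlinarith

lemma final_bound {n : ℕ} {p δ κ η γ M : ℝ} (hn : 2 ≤ n) (hp0 : 0 < p) (hp1 : p < 1)
    (hδ : 0 < δ) (hδ1 : δ < 1)
    (hκ : (n : ℝ) * p ≤ κ * ((1 - δ) * (((n : ℝ) - 1) * p))) (hκ0 : 0 ≤ κ) (hη : p * M ≤ η)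
    (hγ : 1 + 3 * κ + (2 * κ + κ ^ 2) * η ≤ γ) (hγ1 : 1 ≤ γ) (hM : 0 < M)
    (hMN : M ≤ n) (v : Fin n) (ℓ : ℕ) :
    prPZFwithin n p v ℓ ≤ n * Real.exp (-(δ ^ 2 / 2 * (((n : ℝ) - 1) * p))) + γ ^ ℓ / M := by
  have hn' : (2 : ℝ) ≤ n := by exact_mod_cast hn
  set d : ℝ := (1 - δ) * (((n : ℝ) - 1) * p) with hd
  have hd0 : 0 < d := mul_pos (by linarith) (mul_pos (by linarith) hp0)
  have her : ∀ G : SimpleGraph (Fin n), 0 ≤ erProb n p G := fun G =>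
    mul_nonneg (pow_nonneg hp0.le _) (pow_nonneg (by linarith) _)
  have h1 : prPZFwithin n p v ℓ ≤ ∑ G : SimpleGraph (Fin n), erProb n p G *
      ((fun S => (∑ u : Fin n, (if ((S.filter (fun e => u ∈ e)).card : ℝ) < d then 1 else 0)) +
        FS d S ℓ {v}) (edg G)) := by
    unfold prPZFwithin
    refine Finset.sum_le_sum fun G _ => mul_le_mul_of_nonneg_left ?_ (her G)
    rw [probAllBlue_eq]
    by_cases h : ∀ u, d ≤ deg G u
    · have := Rp_le_FS hd0 (mem_edg G) h ℓ {v}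
      refine this.trans ?_
      simp only
      have h0 : 0 ≤ ∑ u : Fin n,
          (if (((edg G).filter (fun e => u ∈ e)).card : ℝ) < d then (1 : ℝ) else 0) :=
        Finset.sum_nonneg fun u _ => by split_ifs <;> norm_num
      linarith
    · push Not at h
      obtain ⟨u, hu⟩ := h
      rw [deg_eq] at hu
      have h0 : (1 : ℝ) ≤ ∑ u : Fin n,
          (if (((edg G).filter (fun e => u ∈ e)).card : ℝ) < d then (1 : ℝ) else 0) := by
        refine le_trans ?_ (Finset.single_le_sum (f := fun u : Fin n =>
          (if (((edg G).filter (fun e => u ∈ e)).card : ℝ) < d then (1 : ℝ) else 0))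
          (fun u _ => by split_ifs <;> norm_num) (Finset.mem_univ u))
        simp only [hu, if_true, le_refl]
      have h2 := (Rp_bounds G ℓ {v}).2
      have h3 := (FS_bounds hd0 (edg G) ℓ {v}).1
      simp only
      linarith
  refine h1.trans ?_
  rw [sum_graph p (fun S => (∑ u : Fin n,
    (if ((S.filter (fun e => u ∈ e)).card : ℝ) < d then 1 else 0)) + FS d S ℓ {v}), PEs_add, PEs_sum]
  refine add_le_add ?_ ?_
  · have : ∀ u ∈ (Finset.univ : Finset (Fin n)), PEs (topE (Fin n)) (fun _ => p) (fun S =>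
        if ((S.filter (fun e => u ∈ e)).card : ℝ) < d then 1 else 0) ≤
        Real.exp (-(δ ^ 2 / 2 * (((n : ℝ) - 1) * p))) := by
      intro u _
      have := chernoff (V := Fin n) hp0.le hp1.le (by simp; omega) hδ hδ1 u
      simpa only [Fintype.card_fin] using this
    refine (Finset.sum_le_sum this).trans (le_of_eq ?_)
    simp
  · have := annealed (V := Fin n) hd0 hp0.le hp1 (by simpa using hκ) hκ0 hη hγ hγ1 hM
      (by simpa using hMN) (topE (Fin n)) ℓ {v} ∅ (fun _ => p) (by simp)
      (fun _ => ⟨hp0.le, le_rfl⟩)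
    have hT : topE (Fin n) \ ({v} : Finset (Fin n)).sym2 = topE (Fin n) := by
      rw [Finset.sdiff_eq_self_iff_disjoint, Finset.disjoint_left]
      intro e he he'
      simp [topE] at he
      simp at he'
      subst he'
      simp at he
    have hX : XS (∅ : Finset (Sym2 (Fin n))) {v} = 1 := by
      simp [XS, bS, Finset.filter_singleton]
    rw [hT, hX, mul_one] at this
    simpa only [Finset.empty_union] using this

end Compare

end PZF

namespace PZF

lemma prPZF_zero {n : ℕ} (hn : 2 ≤ n) (p : ℝ) (v : Fin n) : prPZFwithin n p v 0 = 0 := by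
  unfold prPZFwithin
  refine Finset.sum_eq_zero fun G _ => ?_
  rw [probAllBlue_eq]
  simp only [Rp]
  rw [if_neg, mul_zero]
  intro h
  have := Finset.card_le_card h
  simp at this
  omega

lemma gamma_pow_le {C s P : ℝ} (hC0 : 0 < C) (hs : 0 < s) (hP : 0 < P) (hP1 : P ≤ 1) :
    ((4 : ℝ) ^ s) ^ (⌈C * Real.logb 4 (1 / P)⌉₊ - 1) ≤ P ^ (-(C * s)) := by
  set x := C * Real.logb 4 (1 / P) with hx
  have h1P : 1 ≤ 1 / P := by rw [le_div_iff₀ hP]; linarith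
  have hx0 : 0 ≤ x := mul_nonneg hC0.le (Real.logb_nonneg (by norm_num) h1P)
  have hl : ((⌈x⌉₊ - 1 : ℕ) : ℝ) ≤ x := by
    rcases Nat.eq_zero_or_pos ⌈x⌉₊ with h | h
    · rw [h]; simpa using hx0
    · rw [Nat.cast_sub h]
      have := Nat.ceil_lt_add_one hx0
      push_cast; linarith
  rw [← Real.rpow_natCast, ← Real.rpow_mul (by norm_num)]
  calc (4 : ℝ) ^ (s * ((⌈x⌉₊ - 1 : ℕ) : ℝ)) ≤ (4 : ℝ) ^ (s * x) := by
        apply Real.rpow_le_rpow_of_exponent_le (by norm_num)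
        exact mul_le_mul_of_nonneg_left hl hs.le
    _ = ((4 : ℝ) ^ (Real.logb 4 (1 / P))) ^ (C * s) := by
        rw [← Real.rpow_mul (by norm_num), hx]; congr 1; ring
    _ = P ^ (-(C * s)) := by
        rw [Real.rpow_logb (by norm_num) (by norm_num) (by positivity), one_div,
          Real.inv_rpow hP.le, Real.rpow_neg hP.le]

lemma tendsto_logsq (a : ℝ) (ha : 0 < a) :
    Tendsto (fun n : ℕ => (1 / Real.log n ^ 2) ^ a) atTop (nhds 0) := by
  have h1 : Tendsto (fun n : ℕ => Real.log n ^ 2) atTop atTop :=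
    (tendsto_pow_atTop (by norm_num)).comp (Real.tendsto_log_atTop.comp tendsto_natCast_atTop_atTop)
  have h2 : Tendsto (fun n : ℕ => 1 / Real.log n ^ 2) atTop (nhds 0) := by
    simp only [one_div]
    exact h1.inv_tendsto_atTop
  have := h2.rpow_const (p := a) (Or.inr ha.le)
  simpa [Real.zero_rpow ha.ne'] using this

set_option maxHeartbeats 2000000 in
lemma main_bound (p : ℕ → ℝ) (hp : ∀ n, 0 ≤ p n ∧ p n ≤ 1)
    (hlow : Tendsto (fun n : ℕ => (Real.log n / n) / p n) atTop (nhds 0))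
    (hup : ∀ᶠ n : ℕ in atTop, p n ≤ 1 / Real.log n ^ 2)
    (C : ℝ) (hC0 : 0 < C) (hC1 : C < 1) :
    ∃ g : ℕ → ℝ, Tendsto g atTop (nhds 0) ∧ ∀ᶠ n : ℕ in atTop, ∀ v : Fin n,
      prPZFwithin n (p n) v (⌈C * Real.logb 4 (1 / p n)⌉₊ - 1) ≤ g n := by
  set s : ℝ := 1 + (1 - C) / 4 with hs
  set C' : ℝ := (1 + C) / 2 with hC'
  set a : ℝ := C' - C * s with ha
  have hs1 : 1 < s := by rw [hs]; linarith
  have ha0 : 0 < a := by rw [ha, hC', hs]; nlinarith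
  have hC'1 : C' < 1 := by rw [hC']; linarith
  have hC'0 : 0 < C' := by rw [hC']; linarith
  set γ : ℝ := (4 : ℝ) ^ s with hγ
  have hγ4 : 4 < γ := by
    have := Real.rpow_lt_rpow_of_exponent_lt (x := 4) (by norm_num) hs1
    rwa [Real.rpow_one] at this
  set τ : ℝ := min 1 ((γ - 4) / 4) with hτ
  have hτ0 : 0 < τ := lt_min one_pos (by linarith)
  have hτ1 : τ ≤ 1 := min_le_left _ _
  have hτγ : τ ≤ (γ - 4) / 4 := min_le_right _ _
  have hγb : 1 + 3 * (1 + τ) + (2 * (1 + τ) + (1 + τ) ^ 2) * (τ / 8) ≤ γ := by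
    have : (2 * (1 + τ) + (1 + τ) ^ 2) ≤ 8 := by nlinarith
    have := mul_le_mul_of_nonneg_right this (by positivity : 0 ≤ τ / 8)
    linarith
  set δ : ℝ := τ / 4 with hδ
  have hδ0 : 0 < δ := by positivity
  have hδ1 : δ < 1 := by rw [hδ]; linarith
  have hη := (tendsto_logsq (1 - C') (by linarith)).eventually
    (ge_mem_nhds (by positivity : (0 : ℝ) < τ / 8))
  have hlow' := hlow.eventually (ge_mem_nhds (by positivity : (0 : ℝ) < δ ^ 2 / 8))
  have hlogT : Tendsto (fun n : ℕ => Real.log n) atTop atTop :=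
    Real.tendsto_log_atTop.comp tendsto_natCast_atTop_atTop
  refine ⟨fun n => 1 / (n : ℝ) + (1 / Real.log n ^ 2) ^ a, ?_, ?_⟩
  · simpa using (tendsto_one_div_atTop_nhds_zero_nat (𝕜 := ℝ)).add (tendsto_logsq a ha0)
  filter_upwards [hη, hlow', hup, eventually_ge_atTop 2,
    (tendsto_natCast_atTop_atTop (R := ℝ)).eventually_ge_atTop (1 + 2 / τ),
    hlogT.eventually_ge_atTop 2] with n hη hlow hup hn2 hnτ hlog v
  have hn0 : (2 : ℝ) ≤ n := by exact_mod_cast hn2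
  have hlog0 : 0 < Real.log n := by linarith
  have hL : 0 ≤ 1 / Real.log n ^ 2 := by positivity
  have hga : 0 ≤ (1 / Real.log n ^ 2) ^ a := Real.rpow_nonneg hL _
  rcases (hp n).1.eq_or_lt with h0 | hP
  · rw [← h0]
    simp only [div_zero, Real.logb_zero, mul_zero, Nat.ceil_zero]
    rw [prPZF_zero hn2]
    positivity
  set P := p n with hPdef
  have hP1 : P < 1 := by
    refine hup.trans_lt ?_
    rw [div_lt_one (by positivity)]
    nlinarith
  have hnP : 8 / δ ^ 2 * Real.log n ≤ n * P := by
    rw [div_div, div_le_iff₀ (by positivity)] at hlow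
    rw [div_mul_eq_mul_div, div_le_iff₀ (by positivity)]
    linarith
  have hδsq : δ ^ 2 ≤ 1 := by nlinarith
  have hnP1 : 1 ≤ n * P := by
    refine le_trans ?_ hnP
    have : 8 ≤ 8 / δ ^ 2 := by rw [le_div_iff₀ (by positivity)]; linarith
    nlinarith
  have hκ : (n : ℝ) * P ≤ (1 + τ) * ((1 - δ) * (((n : ℝ) - 1) * P)) := by
    have h1 : 2 ≤ ((n : ℝ) - 1) * τ := by
      rw [← div_le_iff₀ hτ0]; linarith
    have h2 : (1 + τ / 2) ≤ (1 + τ) * (1 - δ) := by rw [hδ]; nlinarith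
    have h3 : (n : ℝ) ≤ (1 + τ) * (1 - δ) * ((n : ℝ) - 1) := by
      have := mul_le_mul_of_nonneg_right h2 (by linarith : (0 : ℝ) ≤ (n : ℝ) - 1)
      linarith
    have := mul_le_mul_of_nonneg_right h3 hP.le
    linarith
  have hM0 : 0 < P ^ (-C') := Real.rpow_pos_of_pos hP _
  have hη' : P * P ^ (-C') ≤ τ / 8 := by
    have : P * P ^ (-C') = P ^ (1 - C') := by
      rw [sub_eq_add_neg, Real.rpow_add hP, Real.rpow_one]
    rw [this]
    exact (Real.rpow_le_rpow hP.le hup (by linarith)).trans hη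
  have hMn : P ^ (-C') ≤ n := by
    calc P ^ (-C') ≤ P ^ (-1 : ℝ) :=
          Real.rpow_le_rpow_of_exponent_ge hP hP1.le (by linarith)
      _ = P⁻¹ := Real.rpow_neg_one P
      _ ≤ n := by rw [inv_le_iff_one_le_mul₀ hP]; linarith
  refine (final_bound hn2 hP hP1 hδ0 hδ1 hκ (by positivity) hη' hγb (by linarith) hM0 hMn v
    _).trans ?_
  refine add_le_add ?_ ?_
  · have h1 : 2 * Real.log n ≤ δ ^ 2 / 2 * (((n : ℝ) - 1) * P) := by
      have h2 : n * P / 2 ≤ ((n : ℝ) - 1) * P := by nlinarith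
      have h3 : 8 * Real.log n ≤ δ ^ 2 * (n * P) := by
        rw [div_mul_eq_mul_div, div_le_iff₀ (by positivity)] at hnP
        linarith
      have := mul_le_mul_of_nonneg_left h2 (by positivity : 0 ≤ δ ^ 2 / 2)
      linarith
    have h4 : Real.exp (-(δ ^ 2 / 2 * (((n : ℝ) - 1) * P))) ≤ 1 / (n : ℝ) ^ 2 := by
      calc _ ≤ Real.exp (-(2 * Real.log n)) := Real.exp_le_exp.2 (by linarith)
        _ = 1 / (n : ℝ) ^ 2 := by
          rw [Real.exp_neg, two_mul, Real.exp_add, Real.exp_log (by linarith), one_div, sq]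
    calc _ ≤ (n : ℝ) * (1 / (n : ℝ) ^ 2) := mul_le_mul_of_nonneg_left h4 (by linarith)
      _ = 1 / (n : ℝ) := by field_simp
  · have h1 := gamma_pow_le (s := s) hC0 (by linarith) hP hP1.le
    rw [div_le_iff₀ hM0]
    refine h1.trans ?_
    have : P ^ (-(C * s)) = P ^ a * P ^ (-C') := by
      rw [← Real.rpow_add hP, ha]; congr 1; ring
    rw [this]
    exact mul_le_mul_of_nonneg_right (Real.rpow_le_rpow hP.le hup ha0.le) hM0.le

end PZF

/-- If `log n / n ≪ p ≤ 1 / log² n` and `0 < C₁ < C₂ < 1` are constants,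
then for each fixed vertex `v` of `G(n,p)`, a.a.s.
`pt_pzf(G(n,p), v) ≥ (C₂ - C₁) log₄ (1/p)`: the probability that all vertices are blue within
`⌈(C₂ - C₁) log₄ (1/p)⌉₊ - 1` rounds tends to `0`. -/
theorem pzf_lower_bound_sparse
    (p : ℕ → ℝ) (hp : ∀ n, 0 ≤ p n ∧ p n ≤ 1)
    (hlow : Tendsto (fun n : ℕ => (Real.log n / n) / p n) atTop (nhds 0))
    (hup : ∀ᶠ n : ℕ in atTop, p n ≤ 1 / Real.log n ^ 2)
    (C₁ C₂ : ℝ) (hC₁ : 0 < C₁) (hC₁₂ : C₁ < C₂) (hC₂ : C₂ < 1)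
    (v : (n : ℕ) → Fin (n + 1)) :
    Tendsto
      (fun n => PZF.prPZFwithin (n + 1) (p (n + 1)) (v n)
        (⌈(C₂ - C₁) * Real.logb 4 (1 / p (n + 1))⌉₊ - 1))
      atTop (nhds 0) := by
  set C := C₂ - C₁ with hC
  have hC0 : 0 < C := by rw [hC]; linarith
  have hC1 : C < 1 := by rw [hC]; linarith
  obtain ⟨g, hg0, hg⟩ := PZF.main_bound p hp hlow hup C hC0 hC1
  have hnn : ∀ n, 0 ≤ PZF.prPZFwithin (n + 1) (p (n + 1)) (v n)
      (⌈C * Real.logb 4 (1 / p (n + 1))⌉₊ - 1) := by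
    intro n
    unfold PZF.prPZFwithin
    refine Finset.sum_nonneg fun G _ => mul_nonneg ?_ ?_
    · exact mul_nonneg (pow_nonneg (hp _).1 _) (pow_nonneg (by linarith [(hp (n + 1)).2]) _)
    · rw [PZF.probAllBlue_eq]
      exact (PZF.Rp_bounds G _ _).1
  refine tendsto_of_tendsto_of_tendsto_of_le_of_le' tendsto_const_nhds
    (hg0.comp (tendsto_add_atTop_nat 1)) (Eventually.of_forall hnn) ?_
  filter_upwards [(tendsto_add_atTop_nat 1).eventually hg] with n hn
  exact hn (v n)
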